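/- Let ℍ be the hyperbolic plane, let C ≥ 1 be a real number, let X' be a subset of ℍ, and let f : X' → ℍ be a C-Lipschitz map. Then there exists a C-Lipschitz map F : ℍ → ℍ with F(x) = f(x) for all x ∈ X'. -/

import Mathlib

open scoped UpperHalfPlane

/-!
By Zorn's lemma it suffices to extend `f` to one more point `x`, that is, to find a point common to
the balls of radius `C * d(x, xᵢ)` around `f xᵢ`; since closed balls are compact, finitely many
balls at a time are enough. Hyperbolic balls are Euclidean balls, so the minimax theorem reduces
the existence of a common point to the inequalities
`∑ᵢⱼ wᵢ wⱼ cosh d(f xᵢ, f xⱼ) ≤ (∑ᵢ wᵢ cosh (C * d(x, xᵢ)))²` for nonnegative weights `w`.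

On the left, `d(f xᵢ, f xⱼ)` may be replaced by `C * d(xᵢ, xⱼ)`. As `u ↦ cosh (C * arcosh u)` is
convex for `C ≥ 1`, the law of cosines shows that dilating geodesics by `C` from `x` multiplies
distances by at least `C`:
`cosh (C * d(xᵢ, xⱼ)) ≤ cosh (C * d(x, xᵢ)) * cosh (C * d(x, xⱼ)) - ⟪vᵢ, vⱼ⟫`, where `vᵢ` is the
vector of length `sinh (C * d(x, xᵢ))` pointing from `x` towards `xᵢ`. Summing, the two sides differ
by at least `‖∑ᵢ wᵢ vᵢ‖² ≥ 0`.
-/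

section Convexity

open Real Set

theorem sinh_mul_mul_cosh_le {C t : ℝ} (hC : 1 ≤ C) (ht : 0 ≤ t) :
    sinh (C * t) * cosh t ≤ C * cosh (C * t) * sinh t := by
  let gap : ℝ → ℝ := fun s => C * cosh (C * s) * sinh s - sinh (C * s) * cosh s
  have hasDerivAt_gap (s : ℝ) : HasDerivAt gap ((C ^ 2 - 1) * (sinh (C * s) * sinh s)) s := by
    have hlin : HasDerivAt (fun s : ℝ => C * s) C s := hasDerivAt_const_mul C
    refine (((hlin.cosh.const_mul C).mul (hasDerivAt_sinh s)).sub
      (hlin.sinh.mul (hasDerivAt_cosh s))).congr_deriv ?_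
    ring
  have monotone_gap : MonotoneOn gap (Ici 0) := by
    refine monotoneOn_of_hasDerivWithinAt_nonneg (convex_Ici 0)
      (fun s _ => (hasDerivAt_gap s).continuousAt.continuousWithinAt)
      (fun s _ => (hasDerivAt_gap s).hasDerivWithinAt) fun s hs => ?_
    rw [interior_Ici, mem_Ioi] at hs
    have hsq : 0 ≤ C ^ 2 - 1 := by nlinarith
    have := sinh_pos_iff.2 hs
    have : 0 ≤ sinh (C * s) := sinh_nonneg_iff.2 (by positivity)
    positivity
  have gap_nonneg : gap 0 ≤ gap t := monotone_gap self_mem_Ici ht ht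
  simpa [gap] using gap_nonneg

theorem monotoneOn_sinh_mul_div_sinh {C : ℝ} (hC : 1 ≤ C) :
    MonotoneOn (fun t => sinh (C * t) / sinh t) (Ioi 0) := by
  have hderiv {t : ℝ} (ht : 0 < t) : HasDerivAt (fun t => sinh (C * t) / sinh t)
      ((C * cosh (C * t) * sinh t - sinh (C * t) * cosh t) / sinh t ^ 2) t := by
    refine ((hasDerivAt_const_mul C).sinh.div (hasDerivAt_sinh t)
      (sinh_pos_iff.2 ht).ne').congr_deriv ?_
    ring
  refine monotoneOn_of_hasDerivWithinAt_nonneg (convex_Ioi 0)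
    (fun t ht => (hderiv ht).continuousAt.continuousWithinAt)
    (fun t ht => (hderiv (interior_subset ht)).hasDerivWithinAt) fun t ht => ?_
  have := sinh_mul_mul_cosh_le hC (le_of_lt (interior_subset ht))
  exact div_nonneg (by linarith) (sq_nonneg _)

theorem convexOn_cosh_mul_arcosh {C : ℝ} (hC : 1 ≤ C) :
    ConvexOn ℝ (Ici 1) fun u => cosh (C * arcosh u) := by
  have hderiv {u : ℝ} (hu : u ∈ Ioi 1) : HasDerivAt (fun u => cosh (C * arcosh u))
      (C * (sinh (C * arcosh u) / sinh (arcosh u))) u := by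
    refine ((hasDerivAt_arcosh hu).const_mul C).cosh.congr_deriv ?_
    rw [sinh_arcosh (le_of_lt hu)]
    ring
  refine MonotoneOn.convexOn_of_deriv (convex_Ici 1)
    (continuous_cosh.comp_continuousOn (continuousOn_arcosh.const_mul C))
    (fun u hu => ?_) ?_ <;> rw [interior_Ici] at *
  · exact (hderiv hu).differentiableAt.differentiableWithinAt
  · intro u hu v hv huv
    rw [(hderiv hu).deriv, (hderiv hv).deriv]
    refine mul_le_mul_of_nonneg_left ?_ (by linarith)
    exact monotoneOn_sinh_mul_div_sinh hC (arcosh_pos hu) (arcosh_pos hv)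
      ((arcosh_le_arcosh (one_pos.trans hu) (one_pos.trans hv)).2 huv)

theorem cosh_mul_arcosh_cosh (C t : ℝ) : cosh (C * arcosh (cosh t)) = cosh (C * t) := by
  rw [← cosh_abs t, arcosh_cosh (abs_nonneg t), ← cosh_abs (C * |t|), ← cosh_abs (C * t),
    abs_mul, abs_mul, abs_abs]

-- `cosh c` is the convex combination of `cosh (a - b)` and `cosh (a + b)` with weights
-- `(1 ± τ) / 2`, so the claim is Jensen's inequality for `u ↦ cosh (C * arcosh u)`.
theorem cosh_mul_le_of_cosh_eq {C a b c τ : ℝ} (hC : 1 ≤ C) (hτ : |τ| ≤ 1)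
    (hc : cosh c = cosh a * cosh b - sinh a * sinh b * τ) :
    cosh (C * c) ≤ cosh (C * a) * cosh (C * b) - sinh (C * a) * sinh (C * b) * τ := by
  obtain ⟨hτ₁, hτ₂⟩ := abs_le.1 hτ
  have hcomb : (1 + τ) / 2 * cosh (a - b) + (1 - τ) / 2 * cosh (a + b) = cosh c := by
    rw [hc, cosh_sub, cosh_add]
    ring
  have jensen := (convexOn_cosh_mul_arcosh hC).2 (one_le_cosh (a - b)) (one_le_cosh (a + b))
    (show 0 ≤ (1 + τ) / 2 by linarith) (show 0 ≤ (1 - τ) / 2 by linarith) (by ring)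
  simp only [smul_eq_mul, hcomb, cosh_mul_arcosh_cosh] at jensen
  rw [mul_sub, mul_add, cosh_sub, cosh_add] at jensen
  linarith

end Convexity

section Minimax

variable {ι : Type*} [Fintype ι] [Nonempty ι]

theorem exists_forall_nonpos_of_forall_stdSimplex {E : Type*} [TopologicalSpace E]
    [AddCommGroup E] [Module ℝ E] [IsTopologicalAddGroup E] [ContinuousSMul ℝ E] {K : Set E}
    {g : ι → E → ℝ} (hK : IsCompact K) (hconv : ∀ i, ConvexOn ℝ K (g i))
    (hlsc : ∀ i, LowerSemicontinuousOn (g i) K)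
    (h : ∀ w ∈ stdSimplex ℝ ι, ∃ z ∈ K, ∑ i, w i * g i z ≤ 0) :
    ∃ z ∈ K, ∀ i, g i z ≤ 0 := by
  classical
  have hvertex (i : ι) := single_mem_stdSimplex ℝ i
  let i₀ : ι := Classical.arbitrary ι
  have hne : K.Nonempty := (h _ (hvertex i₀)).imp fun _ => And.left
  have hconvex : ∀ w ∈ stdSimplex ℝ ι, ConvexOn ℝ K fun z => ∑ i, w i * g i z := by
    intro w hw
    simp only [← smul_eq_mul, ← Pi.smul_apply, ← Finset.sum_apply]
    exact Finset.sum_induction _ (ConvexOn ℝ K) (fun _ _ => ConvexOn.add)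
      (convexOn_const 0 (hconv i₀).1) fun i _ => (hconv i).smul (hw.1 i)
  have hlinear (z : E) : IsLinearMap ℝ fun w : ι → ℝ => ∑ i, w i * g i z :=
    ⟨fun v w => by simp [add_mul, Finset.sum_add_distrib],
      fun c w => by simp [Finset.mul_sum, mul_assoc]⟩
  obtain ⟨z, hz, w, hw, hsaddle⟩ := Sion.exists_isSaddlePointOn hne (hconv i₀).1 hK
    (f := fun z (w : ι → ℝ) => ∑ i, w i * g i z)
    (fun w hw => lowerSemicontinuousOn_sum fun i _ =>
      (continuous_const_mul (w i)).comp_lowerSemicontinuousOn (hlsc i)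
        (monotone_mul_left_of_nonneg (hw.1 i)))
    (fun w hw => (hconvex w hw).quasiconvexOn)
    (convex_stdSimplex ℝ ι) ⟨_, hvertex i₀⟩ (isCompact_stdSimplex ℝ ι)
    (fun z _ => (Continuous.upperSemicontinuous (by fun_prop)).upperSemicontinuousOn _)
    (fun z _ => ((hlinear z).mk'.concaveOn (convex_stdSimplex ℝ ι)).quasiconcaveOn)
  obtain ⟨z', hz', hle⟩ := h w hw
  refine ⟨z, hz, fun i => ?_⟩
  simpa [Pi.single_apply] using (hsaddle z' hz' _ (hvertex i)).trans hle

theorem exists_forall_dist_sq_le {E : Type*} [NormedAddCommGroup E] [NormedSpace ℝ E]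
    (P : ι → E) (ρ : ι → ℝ)
    (h : ∀ w ∈ stdSimplex ℝ ι, ∑ i, w i * dist (∑ j, w j • P j) (P i) ^ 2 ≤ ∑ i, w i * ρ i) :
    ∃ z, ∀ i, dist z (P i) ^ 2 ≤ ρ i := by
  have hconv : Convex ℝ (convexHull ℝ (Set.range P)) := convex_convexHull ℝ _
  obtain ⟨z, -, hz⟩ := exists_forall_nonpos_of_forall_stdSimplex
    (g := fun i z => dist z (P i) ^ 2 - ρ i) ((Set.finite_range P).isCompact_convexHull ℝ)
    (fun i => ((convexOn_dist (P i) hconv).pow (fun _ _ => dist_nonneg) 2).sub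
      (concaveOn_const _ hconv))
    (fun i => (Continuous.lowerSemicontinuous (by fun_prop)).lowerSemicontinuousOn _)
    (fun w hw => ⟨∑ j, w j • P j,
      mem_convexHull_of_exists_fintype w P hw.1 hw.2 Set.mem_range_self rfl, by
        simpa only [mul_sub, Finset.sum_sub_distrib, sub_nonpos] using h w hw⟩)
  exact ⟨z, fun i => sub_nonpos.1 (hz i)⟩

end Minimax

theorem sum_mul_dist_sum_smul_sq {ι E : Type*} [Fintype ι] [NormedAddCommGroup E]
    [InnerProductSpace ℝ E] {w : ι → ℝ} (hw : ∑ i, w i = 1) (P : ι → E) :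
    ∑ i, w i * dist (∑ j, w j • P j) (P i) ^ 2 =
      ∑ i, w i * ‖P i‖ ^ 2 - ‖∑ i, w i • P i‖ ^ 2 := by
  set z := ∑ j, w j • P j with hz
  have hinner : ∑ i, w i * inner ℝ z (P i) = ‖z‖ ^ 2 := by
    rw [← real_inner_self_eq_norm_sq]
    nth_rw 3 [hz]
    simp only [inner_sum, real_inner_smul_right]
  calc ∑ i, w i * dist z (P i) ^ 2
      = ∑ i, (w i * ‖z‖ ^ 2 - 2 * (w i * inner ℝ z (P i)) + w i * ‖P i‖ ^ 2) := by
        refine Finset.sum_congr rfl fun i _ => ?_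
        rw [dist_eq_norm, norm_sub_sq_real]
        ring
    _ = ∑ i, w i * ‖P i‖ ^ 2 - ‖z‖ ^ 2 := by
        rw [Finset.sum_add_distrib, Finset.sum_sub_distrib, ← Finset.sum_mul, ← Finset.mul_sum,
          hw, hinner]
        ring

section HyperbolicPlane

open Real

theorem im_mul_im_mul_cosh_dist (z w : ℍ) :
    z.im * w.im * cosh (dist z w) =
      (‖(z : ℂ)‖ ^ 2 + ‖(w : ℂ)‖ ^ 2) / 2 - z.re * w.re := by
  rw [UpperHalfPlane.cosh_dist', Complex.sq_norm, Complex.sq_norm, Complex.normSq_apply,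
    Complex.normSq_apply]
  simp only [UpperHalfPlane.coe_re, UpperHalfPlane.coe_im]
  have := z.im_pos
  have := w.im_pos
  field_simp
  ring

theorem sum_sum_im_mul_cosh_dist {ι : Type*} [Fintype ι] {w : ι → ℝ} (hw : ∑ i, w i = 1)
    (Y : ι → ℍ) :
    ∑ i, ∑ j, (w i * (Y i).im) * (w j * (Y j).im) * cosh (dist (Y i) (Y j)) =
      ∑ i, w i * ‖(Y i : ℂ)‖ ^ 2 - (∑ i, w i * (Y i).re) ^ 2 := by
  have hterm (i j : ι) : (w i * (Y i).im) * (w j * (Y j).im) * cosh (dist (Y i) (Y j)) =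
      w i * ‖(Y i : ℂ)‖ ^ 2 * w j / 2 + w i * (w j * ‖(Y j : ℂ)‖ ^ 2) / 2 -
        (w i * (Y i).re) * (w j * (Y j).re) := by
    linear_combination (w i * w j) * im_mul_im_mul_cosh_dist (Y i) (Y j)
  simp only [hterm, Finset.sum_sub_distrib, Finset.sum_add_distrib, ← Finset.sum_div,
    ← Finset.mul_sum, ← Finset.sum_mul, hw]
  ring

theorem norm_sq_center_sub_sq (z : ℍ) (r : ℝ) :
    ‖(z.center r : ℂ)‖ ^ 2 - (z.im * sinh r) ^ 2 = ‖(z : ℂ)‖ ^ 2 := by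
  simp only [Complex.sq_norm, Complex.normSq_apply, UpperHalfPlane.coe_re,
    UpperHalfPlane.coe_im, UpperHalfPlane.center_re, UpperHalfPlane.center_im]
  linear_combination z.im ^ 2 * cosh_sq r

theorem im_pos_of_dist_center_le {y : ℍ} {r : ℝ} {z : ℂ}
    (hz : dist z (y.center r) ≤ y.im * sinh r) : 0 < z.im := by
  have him_sub := (Complex.abs_im_le_norm _).trans ((Complex.dist_eq _ _).symm.trans_le hz)
  rw [Complex.sub_im, UpperHalfPlane.coe_im, UpperHalfPlane.center_im] at him_sub
  have : y.im * sinh r < y.im * cosh r := mul_lt_mul_of_pos_left (sinh_lt_cosh _) y.im_pos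
  linarith [(abs_le.1 him_sub).1]

-- A hyperbolic ball is a Euclidean ball; for weights `w` summing to one, the Euclidean criterion
-- becomes the hypothesis with weights `w i * (Y i).im`.
theorem exists_forall_dist_le_of_sum_cosh_le {ι : Type*} [Fintype ι] [Nonempty ι] (Y : ι → ℍ)
    {r : ι → ℝ} (hr : ∀ i, 0 ≤ r i)
    (h : ∀ w : ι → ℝ, (∀ i, 0 ≤ w i) →
      ∑ i, ∑ j, w i * w j * cosh (dist (Y i) (Y j)) ≤ (∑ i, w i * cosh (r i)) ^ 2) :
    ∃ y : ℍ, ∀ i, dist y (Y i) ≤ r i := by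
  let P (i : ι) : ℂ := (Y i).center (r i)
  let R (i : ι) : ℝ := (Y i).im * sinh (r i)
  have heuclidean : ∀ w ∈ stdSimplex ℝ ι,
      ∑ i, w i * dist (∑ j, w j • P j) (P i) ^ 2 ≤ ∑ i, w i * R i ^ 2 := by
    intro w hw
    have hbary : ‖∑ i, w i • P i‖ ^ 2 =
        (∑ i, w i * (Y i).re) ^ 2 + (∑ i, w i * (Y i).im * cosh (r i)) ^ 2 := by
      simp [P, Complex.sq_norm, Complex.normSq_apply, ← sq, mul_assoc]
    have hweights := h (fun i => w i * (Y i).im) fun i => mul_nonneg (hw.1 i) (Y i).im_pos.le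
    rw [sum_sum_im_mul_cosh_dist hw.2] at hweights
    rw [sum_mul_dist_sum_smul_sq hw.2, sub_le_comm, ← Finset.sum_sub_distrib]
    simp only [← mul_sub, P, R, norm_sq_center_sub_sq]
    linarith
  obtain ⟨z, hz⟩ := exists_forall_dist_sq_le P (fun i => R i ^ 2) heuclidean
  have hdist (i : ι) : dist z (P i) ≤ R i :=
    le_of_sq_le_sq (hz i) (mul_nonneg (Y i).im_pos.le (sinh_nonneg_iff.2 (hr i)))
  have him : 0 < z.im := im_pos_of_dist_center_le (hdist (Classical.arbitrary ι))
  exact ⟨⟨z, him⟩, fun i => UpperHalfPlane.dist_le_iff_dist_coe_center_le.2 (hdist i)⟩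

/-- The spatial part of `z` in the hyperboloid model of `ℍ` based at `x`, whose time coordinate is
`cosh (dist x z)`; the plane of spatial vectors is identified with `ℂ`. -/
noncomputable def hyperboloidVector (x z : ℍ) : ℂ :=
  ⟨(z.re - x.re) / z.im, cosh (dist x z) - x.im / z.im⟩

theorem inner_hyperboloidVector (x z w : ℍ) :
    inner ℝ (hyperboloidVector x z) (hyperboloidVector x w) =
      cosh (dist x z) * cosh (dist x w) - cosh (dist z w) := by
  have := x.im_pos
  have := z.im_pos
  have := w.im_pos
  simp only [hyperboloidVector, Complex.inner, UpperHalfPlane.cosh_dist', Complex.mul_re,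
    Complex.conj_re, Complex.conj_im]
  field_simp
  ring

theorem norm_hyperboloidVector (x z : ℍ) : ‖hyperboloidVector x z‖ = sinh (dist x z) := by
  rw [← sq_eq_sq₀ (norm_nonneg _) (sinh_nonneg_iff.2 dist_nonneg), ← real_inner_self_eq_norm_sq,
    inner_hyperboloidVector, dist_self, cosh_zero, sinh_sq]
  ring

/-- The unit tangent vector at `x` pointing towards `z`, as an element of the spatial plane of
`hyperboloidVector`. It is the junk value `0` when `z = x`. -/
noncomputable def unitDirection (x z : ℍ) : ℂ :=
  (sinh (dist x z))⁻¹ • hyperboloidVector x z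

theorem sinh_dist_smul_unitDirection (x z : ℍ) :
    sinh (dist x z) • unitDirection x z = hyperboloidVector x z := by
  rcases eq_or_ne (sinh (dist x z)) 0 with h | h
  · rw [h, zero_smul, eq_comm, ← norm_eq_zero, norm_hyperboloidVector, h]
  · exact smul_inv_smul₀ h _

theorem norm_unitDirection_le_one (x z : ℍ) : ‖unitDirection x z‖ ≤ 1 := by
  have := sinh_nonneg_iff.2 (dist_nonneg (x := x) (y := z))
  rw [unitDirection, norm_smul, norm_hyperboloidVector, norm_inv, norm_of_nonneg this]
  exact inv_mul_le_one

theorem hyperbolic_law_of_cosines (x z w : ℍ) :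
    cosh (dist z w) = cosh (dist x z) * cosh (dist x w) -
      sinh (dist x z) * sinh (dist x w) * inner ℝ (unitDirection x z) (unitDirection x w) := by
  have h := inner_hyperboloidVector x z w
  rw [← sinh_dist_smul_unitDirection, ← sinh_dist_smul_unitDirection, real_inner_smul_left,
    real_inner_smul_right] at h
  linarith

theorem cosh_mul_dist_le {C : ℝ} (hC : 1 ≤ C) (x z w : ℍ) :
    cosh (C * dist z w) ≤ cosh (C * dist x z) * cosh (C * dist x w) -
      inner ℝ (sinh (C * dist x z) • unitDirection x z)
        (sinh (C * dist x w) • unitDirection x w) := by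
  have hcos : |inner ℝ (unitDirection x z) (unitDirection x w)| ≤ 1 :=
    (abs_real_inner_le_norm _ _).trans
      (mul_le_one₀ (norm_unitDirection_le_one x z) (norm_nonneg _) (norm_unitDirection_le_one x w))
  rw [real_inner_smul_left, real_inner_smul_right, ← mul_assoc]
  exact cosh_mul_le_of_cosh_eq hC hcos (hyperbolic_law_of_cosines x z w)

theorem sum_sum_mul_cosh_mul_dist_le {C : ℝ} (hC : 1 ≤ C) {ι : Type*} [Fintype ι] (X : ι → ℍ)
    (x : ℍ) {w : ι → ℝ} (hw : ∀ i, 0 ≤ w i) :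
    ∑ i, ∑ j, w i * w j * cosh (C * dist (X i) (X j)) ≤
      (∑ i, w i * cosh (C * dist x (X i))) ^ 2 := by
  let v (i : ι) : ℂ := sinh (C * dist x (X i)) • unitDirection x (X i)
  let κ (i : ι) : ℝ := cosh (C * dist x (X i))
  have hgram : ∑ i, ∑ j, w i * w j * inner ℝ (v i) (v j) = ‖∑ i, w i • v i‖ ^ 2 := by
    rw [← real_inner_self_eq_norm_sq]
    simp only [sum_inner, inner_sum, real_inner_smul_left, real_inner_smul_right, mul_assoc,
      mul_left_comm, real_inner_comm]
  calc ∑ i, ∑ j, w i * w j * cosh (C * dist (X i) (X j))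
      ≤ ∑ i, ∑ j, w i * w j * (κ i * κ j - inner ℝ (v i) (v j)) :=
        Finset.sum_le_sum fun i _ => Finset.sum_le_sum fun j _ =>
          mul_le_mul_of_nonneg_left (cosh_mul_dist_le hC x _ _) (mul_nonneg (hw i) (hw j))
    _ = (∑ i, w i * κ i) ^ 2 - ‖∑ i, w i • v i‖ ^ 2 := by
        simp only [mul_sub, Finset.sum_sub_distrib, hgram, sq (∑ i, w i * κ i),
          Finset.sum_mul_sum, mul_mul_mul_comm]
    _ ≤ (∑ i, w i * κ i) ^ 2 := sub_le_self _ (sq_nonneg _)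

theorem exists_forall_dist_le_mul_dist_of_finite {C : ℝ} (hC : 1 ≤ C) {ι : Type*} [Finite ι]
    {X Y : ι → ℍ} (hXY : ∀ i j, dist (Y i) (Y j) ≤ C * dist (X i) (X j)) (x : ℍ) :
    ∃ y : ℍ, ∀ i, dist y (Y i) ≤ C * dist x (X i) := by
  rcases isEmpty_or_nonempty ι with _ | _
  · exact ⟨x, isEmptyElim⟩
  have := Fintype.ofFinite ι
  have : 0 ≤ C := zero_le_one.trans hC
  refine exists_forall_dist_le_of_sum_cosh_le Y (fun i => by positivity) fun w hw => ?_
  refine le_trans ?_ (sum_sum_mul_cosh_mul_dist_le hC X x hw)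
  gcongr with i _ j _
  · exact mul_nonneg (hw i) (hw j)
  · rw [cosh_le_cosh, abs_of_nonneg dist_nonneg, abs_of_nonneg (by positivity)]
    exact hXY i j

end HyperbolicPlane

section Extension

theorem exists_forall_dist_le_of_forall_finset {Y ι : Type*} [PseudoMetricSpace Y] [ProperSpace Y]
    {b : ι → Y} {r : ι → ℝ} (h : ∀ S : Finset ι, ∃ y, ∀ i ∈ S, dist y (b i) ≤ r i) :
    ∃ y, ∀ i, dist y (b i) ≤ r i := by
  classical
  rcases isEmpty_or_nonempty ι with _ | ⟨⟨i₀⟩⟩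
  · exact (h ∅).imp fun _ _ => isEmptyElim
  obtain ⟨y, -, hy⟩ := (isCompact_closedBall (b i₀) (r i₀)).inter_iInter_nonempty
    (fun i => Metric.closedBall (b i) (r i)) (fun _ => Metric.isClosed_closedBall) fun S => by
      obtain ⟨y, hy⟩ := h (insert i₀ S)
      exact ⟨y, hy i₀ (Finset.mem_insert_self i₀ S),
        Set.mem_iInter₂.2 fun i hi => hy i (Finset.mem_insert_of_mem hi)⟩
  exact ⟨y, Set.mem_iInter.1 hy⟩

/-- The set of pairs `G` is the graph of a partial `C`-Lipschitz map; when `Y` is only a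
pseudometric space the values are determined up to distance zero. Graphs make the inclusion order
needed for Zorn's lemma available directly. -/
def IsLipschitzGraph {X Y : Type*} [PseudoMetricSpace X] [PseudoMetricSpace Y] (C : ℝ)
    (G : Set (X × Y)) : Prop :=
  ∀ p ∈ G, ∀ q ∈ G, dist p.2 q.2 ≤ C * dist p.1 q.1

namespace IsLipschitzGraph

variable {X Y : Type*} [PseudoMetricSpace X] [PseudoMetricSpace Y] {C : ℝ}

theorem sUnion {c : Set (Set (X × Y))} (hc : IsChain (· ⊆ ·) c)
    (h : ∀ G ∈ c, IsLipschitzGraph C G) : IsLipschitzGraph C (⋃₀ c) := by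
  rintro p ⟨G, hG, hp⟩ q ⟨H, hH, hq⟩
  rcases hc.total hG hH with hGH | hHG
  · exact h H hH p (hGH hp) q hq
  · exact h G hG p hp q (hHG hq)

theorem insert {G : Set (X × Y)} (hG : IsLipschitzGraph C G) {x : X} {y : Y}
    (hy : ∀ q ∈ G, dist y q.2 ≤ C * dist x q.1) : IsLipschitzGraph C (insert (x, y) G) := by
  rintro p (rfl | hp) q (rfl | hq)
  · simp
  · exact hy q hq
  · rw [dist_comm, dist_comm p.1]
    exact hy p hp
  · exact hG p hp q hq

end IsLipschitzGraph

theorem exists_extension_of_forall_isLipschitzGraph {X Y : Type*} [PseudoMetricSpace X]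
    [MetricSpace Y] {C : ℝ}
    (hpoint : ∀ G : Set (X × Y), IsLipschitzGraph C G →
      ∀ x, ∃ y, ∀ q ∈ G, dist y q.2 ≤ C * dist x q.1)
    {s : Set X} {f : s → Y} (hf : ∀ x y : s, dist (f x) (f y) ≤ C * dist (x : X) (y : X)) :
    ∃ F : X → Y, (∀ x y, dist (F x) (F y) ≤ C * dist x y) ∧ ∀ x : s, F x = f x := by
  obtain ⟨G, hfG, hmax⟩ := zorn_subset_nonempty {G : Set (X × Y) | IsLipschitzGraph C G}
    (fun c hc hchain _ => ⟨⋃₀ c, .sUnion hchain hc, fun _ => Set.subset_sUnion_of_mem⟩)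
    (Set.range fun x : s => ((x : X), f x)) (by
      rintro _ ⟨x, rfl⟩ _ ⟨y, rfl⟩
      exact hf x y)
  have hG : IsLipschitzGraph C G := hmax.prop
  have htotal (x : X) : ∃ y, (x, y) ∈ G := by
    obtain ⟨y, hy⟩ := hpoint G hG x
    exact ⟨y, hmax.le_of_ge (hG.insert hy) (Set.subset_insert _ _) (Set.mem_insert _ _)⟩
  choose F hF using htotal
  refine ⟨F, fun x y => hG _ (hF x) _ (hF y), fun x => dist_le_zero.1 ?_⟩
  simpa using hG _ (hF x) _ (hfG ⟨x, rfl⟩)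

end Extension

theorem stmt_10 (C : ℝ) (hC : 1 ≤ C) (X' : Set ℍ) (f : X' → ℍ)
    (hf : ∀ x y : X', dist (f x) (f y) ≤ C * dist (x : ℍ) (y : ℍ)) :
    ∃ F : ℍ → ℍ, (∀ x y : ℍ, dist (F x) (F y) ≤ C * dist x y) ∧ ∀ x : X', F x = f x := by
  refine exists_extension_of_forall_isLipschitzGraph (fun G hG x => ?_) hf
  obtain ⟨y, hy⟩ := exists_forall_dist_le_of_forall_finset (ι := G) (b := fun q => q.1.2)
    (r := fun q => C * dist x q.1.1) fun S => by
      obtain ⟨y, hy⟩ := exists_forall_dist_le_mul_dist_of_finite hC (ι := S)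
        (fun p q => hG _ p.1.2 _ q.1.2) x
      exact ⟨y, fun q hq => hy ⟨q, hq⟩⟩
  exact ⟨y, fun q hq => hy ⟨q, hq⟩⟩
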